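/- Let k ≥ 1, m ≥ 2, let q : ℝ^{k+1}_+ → ℝ and φ : ℝ^m_+ → ℝ both satisfy the cost-function conditions, let r ∈ {1, 2, ∞}, let c ∈ ℝ^k_+ and d = (d_1,…,d_m) ∈ ℝ^m_+, and set c' = (c, d_1 + ⋯ + d_m) ∈ ℝ^{k+1}_+ and c'' = (c,d) ∈ ℝ^{k+m}_+. Define q̃(x,y) = q(x, φ(y)) for x ∈ ℝ^k_+, y ∈ ℝ^m_+. If the profit operator Π_q is injective on L^r_{I−c'}(ℝ^{k+1}_+) and Π_φ is injective on L^r_{I−d}(ℝ^m_+), then q̃ satisfies the cost-function conditions and Π_{q̃} is injective on L^r_{I−c''}(ℝ^{k+m}_+). -/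

import Mathlib

open MeasureTheory Complex Set ENNReal

noncomputable section

/-- The positive orthant `ℝ^n_+`. -/
def posOrth (n : ℕ) : Set (Fin n → ℝ) := {x | ∀ i, 0 < x i}

/-- `q` satisfies the cost-function conditions: `C¹` on `ℝ^n_+`, positive,
positively homogeneous of degree one, with bounded level sets. -/
def IsCostFun (n : ℕ) (q : (Fin n → ℝ) → ℝ) : Prop :=
  ContDiffOn ℝ 1 q (posOrth n) ∧
  (∀ x ∈ posOrth n, 0 < q x) ∧
  (∀ lam : ℝ, 0 < lam → ∀ x ∈ posOrth n, q (fun i => lam * x i) = lam * q x) ∧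
  (∀ t : ℝ, Bornology.IsBounded {x | x ∈ posOrth n ∧ q x = t})

/-- Membership in `L^r_c(ℝ^n_+)` for `r ∈ [1,∞]` (with `r = ⊤` the weighted-`L^∞`
condition `ess sup |f(x) x^c| < ∞`, and otherwise `∫ |f|^r x^{rc-I} < ∞`). -/
def MemSpaceR (n : ℕ) (r : ℝ≥0∞) (c : Fin n → ℝ) (f : (Fin n → ℝ) → ℝ) : Prop :=
  AEStronglyMeasurable f (volume.restrict (posOrth n)) ∧
  if r = ⊤ then
    ∃ K : ℝ, ∀ᵐ x ∂(volume.restrict (posOrth n)), |f x * ∏ i, x i ^ c i| ≤ K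
  else
    IntegrableOn (fun x => |f x| ^ r.toReal * ∏ i, x i ^ (r.toReal * c i - 1)) (posOrth n)

/-- The profit operator `(Π_q f)(p₀, p)`. -/
def Piq (n : ℕ) (q : (Fin n → ℝ) → ℝ) (f : (Fin n → ℝ) → ℝ)
    (p0 : ℝ) (p : Fin n → ℝ) : ℝ :=
  ∫ x in posOrth n, max 0 (p0 - q (fun i => p i * x i)) * f x

/-- `Π_q` is injective on `L^r_{I-c}(ℝ^n_+)`. -/
def PiqInj (n : ℕ) (r : ℝ≥0∞) (q : (Fin n → ℝ) → ℝ) (c : Fin n → ℝ) : Prop :=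
  ∀ f : (Fin n → ℝ) → ℝ, MemSpaceR n r (fun i => 1 - c i) f →
    (∀ p0 : ℝ, 0 < p0 → ∀ p ∈ posOrth n, Piq n q f p0 p = 0) →
    ∀ᵐ x ∂(volume.restrict (posOrth n)), f x = 0

/-- The composed cost function `q̃(x,y) = q(x, φ(y))` on `ℝ^{k+m}_+`. -/
def nestedCost (k m : ℕ) (q : (Fin (k + 1) → ℝ) → ℝ) (φ : (Fin m → ℝ) → ℝ)
    (v : Fin (k + m) → ℝ) : ℝ :=
  q (Fin.snoc (fun i => v (Fin.castAdd m i)) (φ (fun j => v (Fin.natAdd k j))))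

/-!
Dividing by the weight turns `L^r_{I-c}(ℝ^n_+)` into the unweighted `L^r` of the multiplicative
Haar measure `∏ dxᵢ / xᵢ`, and `f(x) dx` into `x^c g(x) dx / x` with `g(x) = x^{I-c} f(x)`.

Fix a price vector `s` of the inner goods and put `ψ(y) = φ(s y)`. At the prices `(p, τ s)` the
nested profit depends on `g(x, y)` only through its averages `G(x, t)` over the level sets
`ψ(y) = t`: polar coordinates `y = (t / ψ(y')) y'` produce the weight `t^{d₁ + ⋯ + d_m} dt / t`, so
that up to a constant it equals the profit of `G` for the cost function `q` at the prices `(p, τ)`.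
Since the level sets of `φ` are bounded, `y^d ψ(y)^{-(d₁ + ⋯ + d_m)}` is bounded and the averaging
operator maps `L^r` to `L^r`. Injectivity of `Π_q` therefore gives `G = 0` almost everywhere, and
integrating `G(x, t)` against `max{0, p₀ - t}` shows that, for almost every `x`, the `φ`-profit of
`g(x, ·)` vanishes at `s`. The exceptional null set depends on `s`, but the profit is continuous in
`s`, so countably many `s` suffice, and injectivity of `Π_φ` gives `g(x, ·) = 0`.
-/

section ProductMeasures

theorem lintegral_fin_prod_eq_prod {n : ℕ} {E : Type*} [MeasurableSpace E]
    (μ : Fin n → Measure E) [∀ i, SigmaFinite (μ i)] {f : Fin n → E → ℝ≥0∞}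
    (hf : ∀ i, Measurable (f i)) :
    ∫⁻ x, ∏ i, f i (x i) ∂Measure.pi μ = ∏ i, ∫⁻ t, f i t ∂μ i := by
  induction n with
  | zero => simp
  | succ n ih =>
    have h_tail : Measurable fun y : Fin n → E => ∏ i, f i.succ (y i) :=
      Finset.measurable_prod _ fun i _ => (hf i.succ).comp (measurable_pi_apply i)
    calc ∫⁻ x, ∏ i, f i (x i) ∂Measure.pi μ
        = ∫⁻ x : Fin (n + 1) → E, f 0 (x 0) * ∏ i : Fin n, f i.succ (x i.succ) ∂Measure.pi μ := by
          simp_rw [Fin.prod_univ_succ]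
      _ = ∫⁻ z : E × (Fin n → E), f 0 z.1 * ∏ i, f i.succ (z.2 i)
            ∂(μ 0).prod (Measure.pi fun i => μ i.succ) :=
          (measurePreserving_piFinSuccAbove μ 0).lintegral_comp_emb
            (MeasurableEquiv.measurableEmbedding _) fun z => f 0 z.1 * ∏ i, f i.succ (z.2 i)
      _ = (∫⁻ t, f 0 t ∂μ 0) * ∏ i : Fin n, ∫⁻ t, f i.succ t ∂μ i.succ := by
          rw [← ih _ fun i => hf i.succ]
          exact lintegral_prod_mul (hf 0).aemeasurable h_tail.aemeasurable
      _ = ∏ i, ∫⁻ t, f i t ∂μ i := (Fin.prod_univ_succ fun i => ∫⁻ t, f i t ∂μ i).symm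

theorem pi_withDensity {n : ℕ} {E : Type*} [MeasurableSpace E] (μ : Fin n → Measure E)
    [∀ i, SigmaFinite (μ i)] {f : Fin n → E → ℝ≥0∞} (hf : ∀ i, Measurable (f i))
    [∀ i, SigmaFinite ((μ i).withDensity (f i))] :
    Measure.pi (fun i => (μ i).withDensity (f i)) =
      (Measure.pi μ).withDensity fun x => ∏ i, f i (x i) := by
  refine Measure.pi_eq fun s hs => ?_
  rw [withDensity_apply _ (MeasurableSet.univ_pi hs), Measure.restrict_pi_pi,
    lintegral_fin_prod_eq_prod _ hf]
  exact Finset.prod_congr rfl fun i _ => (withDensity_apply _ (hs i)).symm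

variable {α β E : Type*} [MeasurableSpace α] [MeasurableSpace β] [NormedAddCommGroup E]
  {κ : Measure α} {ν : Measure β} {f : α × β → E} {r : ℝ≥0∞}

theorem eLpNorm_eLpNorm_section_le [SFinite ν] [SFinite κ]
    (hf : AEStronglyMeasurable f (κ.prod ν)) :
    eLpNorm (fun x => eLpNorm (fun y => f (x, y)) r ν) r κ ≤ eLpNorm f r (κ.prod ν) := by
  rcases eq_or_ne r 0 with rfl | hr0
  · simp
  rcases eq_or_ne r ⊤ with rfl | hr
  · simp only [eLpNorm_exponent_top]
    refine essSup_le_of_ae_le _ ?_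
    filter_upwards [Measure.ae_ae_of_ae_prod (ae_le_eLpNormEssSup (f := f) (μ := κ.prod ν))]
      with x hx
    exact essSup_le_of_ae_le _ hx
  · simp only [eLpNorm_eq_lintegral_rpow_enorm_toReal hr0 hr, enorm_eq_self]
    gcongr
    rw [lintegral_prod _ (hf.enorm.pow_const _)]
    refine lintegral_mono fun x => le_of_eq ?_
    rw [← ENNReal.rpow_mul, one_div, inv_mul_cancel₀ (ENNReal.toReal_ne_zero.2 ⟨hr0, hr⟩),
      ENNReal.rpow_one]

theorem ae_memLp_section [SFinite ν] [SFinite κ] (hf : MemLp f r (κ.prod ν)) :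
    ∀ᵐ x ∂κ, MemLp (fun y => f (x, y)) r ν := by
  have h_ne_top : ∀ᵐ x ∂κ, eLpNorm (fun y => f (x, y)) r ν < ⊤ := by
    rcases eq_or_ne r 0 with rfl | hr0
    · simp
    rcases eq_or_ne r ⊤ with rfl | hr
    · filter_upwards [Measure.ae_ae_of_ae_prod (ae_le_eLpNormEssSup (f := f) (μ := κ.prod ν))]
        with x hx
      rw [eLpNorm_exponent_top]
      exact (essSup_le_of_ae_le _ hx).trans_lt hf.2
    · have hlint := lintegral_rpow_enorm_lt_top_of_eLpNorm_lt_top hr0 hr hf.2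
      have hm := hf.1.enorm.pow_const r.toReal
      rw [lintegral_prod _ hm] at hlint
      filter_upwards [ae_lt_top' hm.lintegral_prod_right' hlint.ne] with x hx
      exact (eLpNorm_lt_top_iff_lintegral_rpow_enorm_lt_top hr0 hr).2 hx
  filter_upwards [h_ne_top, hf.1.prodMk_left] with x hx hxm using ⟨hxm, hx⟩

theorem memLp_integral_section [NormedSpace ℝ E] [IsFiniteMeasure ν] [SFinite κ] (hr : 1 ≤ r)
    (hf : MemLp f r (κ.prod ν)) : MemLp (fun x => ∫ y, f (x, y) ∂ν) r κ := by
  refine ⟨hf.1.integral_prod_right', ?_⟩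
  set C : ℝ≥0∞ := ν univ ^ (1 / (1 : ℝ≥0∞).toReal - 1 / r.toReal)
  have hC_top : C ≠ ⊤ :=
    ENNReal.rpow_ne_top_of_nonneg (by
      rcases eq_or_ne r ⊤ with rfl | h
      · simp
      · have : 1 ≤ r.toReal := by simpa using ENNReal.toReal_mono h hr
        simpa using inv_le_one_of_one_le₀ this) (measure_ne_top _ _)
  calc eLpNorm (fun x => ∫ y, f (x, y) ∂ν) r κ
      ≤ eLpNorm (fun x => C * eLpNorm (fun y => f (x, y)) r ν) r κ := by
        refine eLpNorm_mono_enorm_ae ?_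
        filter_upwards [hf.1.prodMk_left] with x hx
        calc ‖∫ y, f (x, y) ∂ν‖ₑ ≤ eLpNorm (fun y => f (x, y)) 1 ν := by
              rw [eLpNorm_one_eq_lintegral_enorm]; exact enorm_integral_le_lintegral_enorm _
          _ ≤ eLpNorm (fun y => f (x, y)) r ν * C :=
              eLpNorm_le_eLpNorm_mul_rpow_measure_univ hr hx
          _ = _ := mul_comm _ _
    _ ≤ C.toNNReal • eLpNorm (fun x => eLpNorm (fun y => f (x, y)) r ν) r κ := by
        refine eLpNorm_le_nnreal_smul_eLpNorm_of_ae_le_mul' ?_ r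
        simp [ENNReal.coe_toNNReal hC_top]
    _ ≤ C.toNNReal • eLpNorm f r (κ.prod ν) := by gcongr; exact eLpNorm_eLpNorm_section_le hf.1
    _ < ⊤ := ENNReal.mul_lt_top coe_lt_top hf.2

theorem ae_eq_zero_of_ae_section_eq_zero [SFinite ν] (hf : AEStronglyMeasurable f (κ.prod ν))
    (h_zero : ∀ᵐ x ∂κ, (fun y => f (x, y)) =ᵐ[ν] 0) : f =ᵐ[κ.prod ν] 0 := by
  have h_lintegral : ∫⁻ z, ‖f z‖ₑ ∂κ.prod ν = 0 := by
    rw [lintegral_prod _ hf.enorm, lintegral_congr_ae (g := fun _ => 0), lintegral_zero]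
    filter_upwards [h_zero] with x hx
    rw [lintegral_congr_ae (g := fun _ => 0) (hx.mono fun y hy => by simp [hy]), lintegral_zero]
  exact ((lintegral_eq_zero_iff' hf.enorm).1 h_lintegral).mono fun z hz => enorm_eq_zero.1 hz

end ProductMeasures

section Orthant

variable {n k m : ℕ}

theorem posOrth_eq_pi (n : ℕ) : posOrth n = univ.pi fun _ => Ioi (0 : ℝ) := by
  ext x
  simp [posOrth]

theorem isOpen_posOrth (n : ℕ) : IsOpen (posOrth n) := by
  rw [posOrth_eq_pi]
  exact isOpen_set_pi finite_univ fun _ _ => isOpen_Ioi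

theorem measurableSet_posOrth (n : ℕ) : MeasurableSet (posOrth n) :=
  (isOpen_posOrth n).measurableSet

theorem mul_mem_posOrth {x y : Fin n → ℝ} (hx : x ∈ posOrth n) (hy : y ∈ posOrth n) :
    x * y ∈ posOrth n :=
  fun i => mul_pos (hx i) (hy i)

theorem smul_mem_posOrth {t : ℝ} (ht : 0 < t) {x : Fin n → ℝ} (hx : x ∈ posOrth n) :
    t • x ∈ posOrth n :=
  fun i => mul_pos ht (hx i)

theorem append_mem_posOrth {x : Fin k → ℝ} {y : Fin m → ℝ} (hx : x ∈ posOrth k)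
    (hy : y ∈ posOrth m) : Fin.append x y ∈ posOrth (k + m) := by
  intro i
  induction i using Fin.addCases with
  | left i => simpa using hx i
  | right j => simpa using hy j

theorem snoc_mem_posOrth {x : Fin k → ℝ} {t : ℝ} (hx : x ∈ posOrth k) (ht : 0 < t) :
    (Fin.snoc x t : Fin (k + 1) → ℝ) ∈ posOrth (k + 1) := by
  intro i
  induction i using Fin.lastCases with
  | last => simpa using ht
  | cast i => simpa using hx i

/-- The monomial `x^c = x₁^{c₁}⋯x_n^{c_n}`. -/
def vecPow (x c : Fin n → ℝ) : ℝ := ∏ i, x i ^ c i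

theorem vecPow_pos {x : Fin n → ℝ} (hx : x ∈ posOrth n) (c : Fin n → ℝ) : 0 < vecPow x c :=
  Finset.prod_pos fun i _ => Real.rpow_pos_of_pos (hx i) _

theorem vecPow_add {x : Fin n → ℝ} (hx : x ∈ posOrth n) (a b : Fin n → ℝ) :
    vecPow x (a + b) = vecPow x a * vecPow x b := by
  simp only [vecPow, Pi.add_apply, ← Finset.prod_mul_distrib, Real.rpow_add (hx _)]

theorem vecPow_zero (x : Fin n → ℝ) : vecPow x 0 = 1 := by
  simp [vecPow]

theorem vecPow_smul_right {x : Fin n → ℝ} (hx : x ∈ posOrth n) (r : ℝ) (c : Fin n → ℝ) :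
    vecPow x (r • c) = vecPow x c ^ r := by
  simp only [vecPow, Pi.smul_apply, smul_eq_mul,
    ← Real.finsetProd_rpow _ _ fun i _ => (Real.rpow_pos_of_pos (hx i) _).le,
    ← Real.rpow_mul (hx _).le, mul_comm]

theorem vecPow_smul_left {t : ℝ} (ht : 0 < t) {x : Fin n → ℝ} (hx : x ∈ posOrth n)
    (c : Fin n → ℝ) : vecPow (t • x) c = t ^ (∑ i, c i) * vecPow x c := by
  simp only [vecPow, Pi.smul_apply, smul_eq_mul, Real.mul_rpow ht.le (hx _).le,
    Finset.prod_mul_distrib, Real.rpow_sum_of_pos ht]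

theorem vecPow_le_vecPow {x y c : Fin n → ℝ} (hx : x ∈ posOrth n) (hxy : x ≤ y)
    (hc : ∀ i, 0 ≤ c i) : vecPow x c ≤ vecPow y c :=
  Finset.prod_le_prod (fun i _ => (Real.rpow_pos_of_pos (hx i) _).le)
    fun i _ => Real.rpow_le_rpow (hx i).le (hxy i) (hc i)

theorem vecPow_append (x c : Fin k → ℝ) (y d : Fin m → ℝ) :
    vecPow (Fin.append x y) (Fin.append c d) = vecPow x c * vecPow y d := by
  simp [vecPow, Fin.prod_univ_add]

theorem vecPow_snoc (x c : Fin k → ℝ) (t D : ℝ) :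
    vecPow (Fin.snoc x t : Fin (k + 1) → ℝ) (Fin.snoc c D) = vecPow x c * t ^ D := by
  simp [vecPow, Fin.prod_univ_castSucc]

theorem measurable_vecPow (c : Fin n → ℝ) : Measurable fun x => vecPow x c :=
  Finset.measurable_prod _ fun i _ => (measurable_pi_apply i).pow_const (c i)

end Orthant

section MultiplicativeHaar

variable {n k m : ℕ}

/-- The Haar measure `dt / t` of the multiplicative group `(0, ∞)`, as a measure on `ℝ`. -/
def mulHaar : Measure ℝ := (volume.restrict (Ioi 0)).withDensity fun t => ENNReal.ofReal t⁻¹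

instance sigmaFinite_mulHaar : SigmaFinite mulHaar :=
  SigmaFinite.withDensity_of_ne_top (by simp)

theorem ae_mulHaar_pos : ∀ᵐ t ∂mulHaar, 0 < t :=
  (withDensity_absolutelyContinuous _ _).ae_le (ae_restrict_mem measurableSet_Ioi)

theorem lintegral_mulHaar {h : ℝ → ℝ≥0∞} (hh : Measurable h) :
    ∫⁻ t, h t ∂mulHaar = ∫⁻ t in Ioi 0, ENNReal.ofReal t⁻¹ * h t :=
  lintegral_withDensity_eq_lintegral_mul _ (by fun_prop) hh

theorem measurePreserving_mul_mulHaar {a : ℝ} (ha : 0 < a) :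
    MeasurePreserving (fun t => a * t) mulHaar mulHaar := by
  refine ⟨measurable_const_mul a, Measure.ext_of_lintegral _ fun h hh => ?_⟩
  have h_change_var := lintegral_image_eq_lintegral_abs_deriv_mul measurableSet_Ioi
    (fun t (_ : t ∈ Ioi 0) => (hasDerivAt_const_mul a).hasDerivWithinAt)
    (mul_right_injective₀ ha.ne').injOn fun t => ENNReal.ofReal t⁻¹ * h t
  rw [image_const_mul_Ioi_zero ha] at h_change_var
  rw [lintegral_map hh (measurable_const_mul a), lintegral_mulHaar hh,
    lintegral_mulHaar (h := fun t => h (a * t)) (hh.comp (measurable_const_mul a)), h_change_var]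
  refine lintegral_congr fun t => ?_
  rw [← mul_assoc, ← ENNReal.ofReal_mul (abs_nonneg a), abs_of_pos ha, mul_inv,
    mul_inv_cancel_left₀ ha.ne']

/-- The Haar measure `∏ dxᵢ / xᵢ` of the multiplicative group `ℝ^n_+`, as a measure on `ℝ^n`.
With respect to it, `L^r_c(ℝ^n_+)` is the space of `f` such that `x^c f` is in `L^r`. -/
def mulHaarPi (n : ℕ) : Measure (Fin n → ℝ) := Measure.pi fun _ => mulHaar

instance sigmaFinite_mulHaarPi (n : ℕ) : SigmaFinite (mulHaarPi n) :=
  inferInstanceAs (SigmaFinite (Measure.pi _))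

theorem measurePreserving_smul_mulHaarPi {a : ℝ} (ha : 0 < a) :
    MeasurePreserving (fun x => a • x) (mulHaarPi n) (mulHaarPi n) :=
  measurePreserving_pi _ _ fun _ => measurePreserving_mul_mulHaar ha

theorem mulHaarPi_eq_withDensity (n : ℕ) :
    mulHaarPi n =
      (volume.restrict (posOrth n)).withDensity fun x => ENNReal.ofReal (vecPow x (-1)) := by
  rw [posOrth_eq_pi, volume_pi, Measure.restrict_pi_pi, mulHaarPi]
  simp only [mulHaar]
  have : SigmaFinite mulHaar := inferInstance
  rw [mulHaar] at this
  rw [pi_withDensity _ fun _ => by fun_prop]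
  refine withDensity_congr_ae ?_
  rw [← Measure.restrict_pi_pi, ← posOrth_eq_pi]
  filter_upwards [ae_restrict_mem (measurableSet_posOrth n)] with x hx
  rw [vecPow, ENNReal.ofReal_prod_of_nonneg fun i _ => (Real.rpow_pos_of_pos (hx i) _).le]
  simp [Real.rpow_neg_one]

theorem ae_mulHaarPi (n : ℕ) : ae (mulHaarPi n) = ae (volume.restrict (posOrth n)) := by
  rw [mulHaarPi_eq_withDensity]
  refine le_antisymm (withDensity_absolutelyContinuous _ _).ae_le
    (withDensity_absolutelyContinuous' (measurable_vecPow _).ennreal_ofReal.aemeasurable ?_).ae_le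
  filter_upwards [ae_restrict_mem (measurableSet_posOrth n)] with x hx
  simpa using vecPow_pos hx (-1)

theorem ae_mulHaarPi_mem_posOrth (n : ℕ) : ∀ᵐ x ∂mulHaarPi n, x ∈ posOrth n := by
  rw [ae_mulHaarPi]
  exact ae_restrict_mem (measurableSet_posOrth n)

theorem aestronglyMeasurable_mulHaarPi_iff {f : (Fin n → ℝ) → ℝ} :
    AEStronglyMeasurable f (mulHaarPi n) ↔
      AEStronglyMeasurable f (volume.restrict (posOrth n)) :=
  ⟨fun h => h.mono_ac (Measure.ae_le_iff_absolutelyContinuous.1 (ae_mulHaarPi n).ge),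
    fun h => h.mono_ac (Measure.ae_le_iff_absolutelyContinuous.1 (ae_mulHaarPi n).le)⟩

theorem integrable_mulHaarPi_iff {f : (Fin n → ℝ) → ℝ} :
    Integrable f (mulHaarPi n) ↔ IntegrableOn (fun x => f x * vecPow x (-1)) (posOrth n) := by
  rw [mulHaarPi_eq_withDensity, integrable_withDensity_iff
    (measurable_vecPow _).ennreal_ofReal (by simp), IntegrableOn]
  refine integrable_congr ?_
  filter_upwards [ae_restrict_mem (measurableSet_posOrth n)] with x hx
  rw [ENNReal.toReal_ofReal (vecPow_pos hx _).le]

theorem integral_mulHaarPi (f : (Fin n → ℝ) → ℝ) :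
    ∫ x, f x ∂mulHaarPi n = ∫ x in posOrth n, vecPow x (-1) * f x := by
  rw [mulHaarPi_eq_withDensity, integral_withDensity_eq_integral_toReal_smul
    (measurable_vecPow _).ennreal_ofReal (by simp)]
  refine setIntegral_congr_fun (measurableSet_posOrth n) fun x hx => ?_
  simp only [ENNReal.toReal_ofReal (vecPow_pos hx (-1)).le, smul_eq_mul]

/-- Concatenation `((x₁, …, x_k), (y₁, …, y_m)) ↦ (x₁, …, x_k, y₁, …, y_m)`. -/
def appendMeasurableEquiv (k m : ℕ) : (Fin k → ℝ) × (Fin m → ℝ) ≃ᵐ (Fin (k + m) → ℝ) :=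
  (Fin.appendHomeomorph k m).toMeasurableEquiv

theorem appendMeasurableEquiv_apply (z : (Fin k → ℝ) × (Fin m → ℝ)) :
    appendMeasurableEquiv k m z = Fin.append z.1 z.2 :=
  rfl

theorem measurePreserving_append_mulHaarPi (k m : ℕ) :
    MeasurePreserving (appendMeasurableEquiv k m) ((mulHaarPi k).prod (mulHaarPi m))
      (mulHaarPi (k + m)) := by
  refine ⟨(appendMeasurableEquiv k m).measurable, (Measure.pi_eq fun s _ => ?_).symm⟩
  have h_preimage : appendMeasurableEquiv k m ⁻¹' univ.pi s =
      (univ.pi fun i => s (Fin.castAdd m i)) ×ˢ (univ.pi fun j => s (Fin.natAdd k j)) := by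
    ext z
    simp [appendMeasurableEquiv_apply, Fin.forall_fin_add]
  rw [MeasurableEquiv.map_apply, h_preimage, Measure.prod_prod, mulHaarPi, mulHaarPi,
    Measure.pi_pi, Measure.pi_pi, Fin.prod_univ_add]

/-- The map `((x₁, …, x_k), t) ↦ (x₁, …, x_k, t)`. -/
def snocMeasurableEquiv (k : ℕ) : (Fin k → ℝ) × ℝ ≃ᵐ (Fin (k + 1) → ℝ) :=
  MeasurableEquiv.prodComm.trans (MeasurableEquiv.piFinSuccAbove (fun _ => ℝ) (Fin.last k)).symm

theorem snocMeasurableEquiv_apply (z : (Fin k → ℝ) × ℝ) :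
    snocMeasurableEquiv k z = Fin.snoc z.1 z.2 :=
  Fin.insertNth_last' z.2 z.1

theorem measurePreserving_snoc_mulHaarPi (k : ℕ) :
    MeasurePreserving (snocMeasurableEquiv k) ((mulHaarPi k).prod mulHaar)
      (mulHaarPi (k + 1)) :=
  (measurePreserving_piFinSuccAbove (fun _ => mulHaar) (Fin.last k)).symm.comp
    Measure.measurePreserving_swap

end MultiplicativeHaar

section ProfitOperator

variable {n : ℕ} {r : ℝ≥0∞} {c : Fin n → ℝ} {q f : (Fin n → ℝ) → ℝ}

theorem aestronglyMeasurable_mul_vecPow_iff :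
    AEStronglyMeasurable (fun x => f x * vecPow x c) (mulHaarPi n) ↔
      AEStronglyMeasurable f (mulHaarPi n) := by
  refine ⟨fun h => ?_, fun h => h.mul (measurable_vecPow c).aestronglyMeasurable⟩
  refine (h.mul (measurable_vecPow (-c)).aestronglyMeasurable).congr ?_
  filter_upwards [ae_mulHaarPi_mem_posOrth n] with x hx
  rw [Pi.mul_apply, mul_assoc, ← vecPow_add hx, add_neg_cancel, vecPow_zero, mul_one]

theorem memSpaceR_iff_memLp (hr0 : r ≠ 0) :
    MemSpaceR n r c f ↔ MemLp (fun x => f x * vecPow x c) r (mulHaarPi n) := by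
  rw [MemSpaceR, ← aestronglyMeasurable_mulHaarPi_iff, ← ae_mulHaarPi]
  change _ ∧ (if r = ⊤ then ∃ K : ℝ, ∀ᵐ x ∂mulHaarPi n, |f x * vecPow x c| ≤ K else _) ↔ _
  split_ifs with hr
  · subst hr
    refine ⟨fun ⟨hf, K, hK⟩ => memLp_top_of_bound (aestronglyMeasurable_mul_vecPow_iff.2 hf) K hK,
      fun h => ⟨aestronglyMeasurable_mul_vecPow_iff.1 h.1, _, ae_le_lpNorm_exponent_top h⟩⟩
  · have h_density : IntegrableOn
          (fun x => |f x| ^ r.toReal * ∏ i, x i ^ (r.toReal * c i - 1)) (posOrth n) ↔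
        Integrable (fun x => ‖f x * vecPow x c‖ ^ r.toReal) (mulHaarPi n) := by
      rw [integrable_mulHaarPi_iff]
      refine integrableOn_congr_fun (fun x hx => ?_) (measurableSet_posOrth n)
      change |f x| ^ r.toReal * vecPow x (r.toReal • c + -1) = _
      rw [vecPow_add hx, vecPow_smul_right hx, norm_mul, Real.norm_eq_abs, Real.norm_eq_abs,
        abs_of_pos (vecPow_pos hx c), Real.mul_rpow (abs_nonneg _) (vecPow_pos hx c).le, mul_assoc]
    rw [h_density]
    exact ⟨fun ⟨hf, hint⟩ => (integrable_norm_rpow_iff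
        (aestronglyMeasurable_mul_vecPow_iff.2 hf) hr0 hr).1 hint,
      fun h => ⟨aestronglyMeasurable_mul_vecPow_iff.1 h.1, h.integrable_norm_rpow hr0 hr⟩⟩

/-- The profit operator in terms of `g(x) = x^{I-c} f(x)`: since `f(x) dx = x^c g(x) dx / x`,
it is the integral of `x^c g(x)` against the same kernel for the multiplicative Haar measure. -/
def haarProfit (q : (Fin n → ℝ) → ℝ) (c : Fin n → ℝ) (g : (Fin n → ℝ) → ℝ) (p0 : ℝ)
    (p : Fin n → ℝ) : ℝ :=
  ∫ x, max 0 (p0 - q (p * x)) * (vecPow x c * g x) ∂mulHaarPi n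

theorem piq_eq_haarProfit (q : (Fin n → ℝ) → ℝ) (c : Fin n → ℝ) (f : (Fin n → ℝ) → ℝ) (p0 : ℝ)
    (p : Fin n → ℝ) : Piq n q f p0 p = haarProfit q c (fun x => f x * vecPow x (1 - c)) p0 p := by
  rw [Piq, haarProfit, integral_mulHaarPi]
  refine setIntegral_congr_fun (measurableSet_posOrth n) fun x hx => ?_
  have h_cancel : vecPow x (-1) * vecPow x c * vecPow x (1 - c) = 1 := by
    rw [← vecPow_add hx, ← vecPow_add hx, show -1 + c + (1 - c) = 0 by abel, vecPow_zero]
  change max 0 (p0 - q (p * x)) * f x = _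
  linear_combination (-max 0 (p0 - q (p * x)) * f x) * h_cancel

theorem piqInj_iff (hr : r ≠ 0) :
    PiqInj n r q c ↔ ∀ g, MemLp g r (mulHaarPi n) →
      (∀ p0, 0 < p0 → ∀ p ∈ posOrth n, haarProfit q c g p0 p = 0) → g =ᵐ[mulHaarPi n] 0 := by
  simp only [PiqInj, memSpaceR_iff_memLp hr, piq_eq_haarProfit q c, ← ae_mulHaarPi]
  refine ⟨fun h_inj g hg hz => ?_, fun h_inj f hf hz => ?_⟩
  · have h_cancel : (fun x => g x * vecPow x (c - 1) * vecPow x (1 - c)) =ᵐ[mulHaarPi n] g := by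
      filter_upwards [ae_mulHaarPi_mem_posOrth n] with x hx
      rw [mul_assoc, ← vecPow_add hx, show c - 1 + (1 - c) = 0 by abel, vecPow_zero, mul_one]
    have h_zero := h_inj (fun x => g x * vecPow x (c - 1)) (hg.ae_eq h_cancel.symm)
      fun p0 hp0 p hp => by
        rw [← hz p0 hp0 p hp]
        exact integral_congr_ae (h_cancel.mono fun x hx => by simp only [hx])
    filter_upwards [h_zero, h_cancel] with x hx hx'
    rw [← hx', hx, zero_mul, Pi.zero_apply]
  · filter_upwards [h_inj _ hf hz, ae_mulHaarPi_mem_posOrth n] with x hx hxpos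
    exact (mul_eq_zero.1 hx).resolve_right (vecPow_pos hxpos _).ne'

theorem piqInj_iff_of_measurePreserving {X : Type*} [MeasurableSpace X] {ν : Measure X}
    (hr : r ≠ 0) (e : X ≃ᵐ (Fin n → ℝ)) (he : MeasurePreserving e ν (mulHaarPi n)) :
    PiqInj n r q c ↔ ∀ g, MemLp g r ν →
      (∀ p0, 0 < p0 → ∀ p ∈ posOrth n,
        ∫ z, max 0 (p0 - q (p * e z)) * (vecPow (e z) c * g z) ∂ν = 0) → g =ᵐ[ν] 0 := by
  rw [piqInj_iff hr]
  refine ⟨fun h_inj g hg hz => ?_, fun h_inj g hg hz => ?_⟩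
  · have h_zero := h_inj (g ∘ e.symm) (hg.comp_measurePreserving he.symm) fun p0 hp0 p hp => by
      rw [haarProfit, ← he.integral_comp']
      simpa using hz p0 hp0 p hp
    filter_upwards [he.quasiMeasurePreserving.ae h_zero] with z hz
    simpa using hz
  · have h_zero := h_inj (g ∘ e) (hg.comp_measurePreserving he) fun p0 hp0 p hp => by
      exact (he.integral_comp' _).trans (hz p0 hp0 p hp)
    filter_upwards [he.symm.quasiMeasurePreserving.ae h_zero] with x hx
    simpa using hx

end ProfitOperator

section CostFunctions

variable {n k m : ℕ} {q : (Fin n → ℝ) → ℝ}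

theorem IsCostFun.continuousOn (hq : IsCostFun n q) : ContinuousOn q (posOrth n) :=
  hq.1.continuousOn

theorem IsCostFun.pos (hq : IsCostFun n q) {x : Fin n → ℝ} (hx : x ∈ posOrth n) : 0 < q x :=
  hq.2.1 x hx

theorem IsCostFun.map_smul (hq : IsCostFun n q) {t : ℝ} (ht : 0 < t) {x : Fin n → ℝ}
    (hx : x ∈ posOrth n) : q (t • x) = t * q x :=
  hq.2.2.1 t ht x hx

theorem IsCostFun.dim_pos (hq : IsCostFun n q) : 0 < n := by
  rcases Nat.eq_zero_or_pos n with rfl | hn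
  · have h_one : (1 : Fin 0 → ℝ) ∈ posOrth 0 := fun i => i.elim0
    have h_double := hq.map_smul two_pos h_one
    rw [Subsingleton.elim ((2 : ℝ) • (1 : Fin 0 → ℝ)) 1] at h_double
    linarith [hq.pos h_one]
  · exact hn

theorem IsCostFun.sum_pos (hq : IsCostFun n q) {c : Fin n → ℝ} (hc : ∀ i, 0 < c i) :
    0 < ∑ i, c i :=
  have : Nonempty (Fin n) := Fin.pos_iff_nonempty.1 hq.dim_pos
  Finset.sum_pos (fun i _ => hc i) Finset.univ_nonempty

theorem IsCostFun.exists_le_mul (hq : IsCostFun n q) :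
    ∃ R, 0 < R ∧ ∀ x ∈ posOrth n, ∀ i, x i ≤ R * q x := by
  obtain ⟨R, hR, h_level⟩ := (hq.2.2.2 1).exists_pos_norm_le
  refine ⟨R, hR, fun x hx i => ?_⟩
  have hqx := hq.pos hx
  have h_norm : ‖(q x)⁻¹ • x‖ ≤ R := h_level _ ⟨smul_mem_posOrth (inv_pos.2 hqx) hx, by
    rw [hq.map_smul (inv_pos.2 hqx) hx, inv_mul_cancel₀ hqx.ne']⟩
  have h_coord : (q x)⁻¹ * x i ≤ R :=
    (Real.le_norm_self _).trans ((norm_le_pi_norm ((q x)⁻¹ • x) i).trans h_norm)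
  rwa [inv_mul_le_iff₀ hqx, mul_comm] at h_coord

theorem isBounded_levelSet_of_le_mul {R : ℝ} (h_le : ∀ x ∈ posOrth n, ∀ i, x i ≤ R * q x) (t : ℝ) :
    Bornology.IsBounded {x | x ∈ posOrth n ∧ q x = t} :=
  (Metric.isBounded_Icc (0 : Fin n → ℝ) fun _ => R * t).subset fun x ⟨hx, hqx⟩ =>
    ⟨fun i => (hx i).le, fun i => hqx ▸ h_le x hx i⟩

/-- The function `y ↦ q(s₁y₁, …, s_ny_n)` on `ℝ^n_+`, extended by `0` so as to be measurable. -/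
def scaledCost (q : (Fin n → ℝ) → ℝ) (s : Fin n → ℝ) : (Fin n → ℝ) → ℝ :=
  (posOrth n).indicator fun y => q (s * y)

theorem scaledCost_apply (q : (Fin n → ℝ) → ℝ) (s : Fin n → ℝ) {y : Fin n → ℝ}
    (hy : y ∈ posOrth n) : scaledCost q s y = q (s * y) :=
  indicator_of_mem hy _

theorem IsCostFun.contDiffOn_scaledCost (hq : IsCostFun n q) {s : Fin n → ℝ}
    (hs : s ∈ posOrth n) : ContDiffOn ℝ 1 (scaledCost q s) (posOrth n) := by
  have h_comp : ContDiffOn ℝ 1 (fun y => q (s * y)) (posOrth n) :=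
    hq.1.comp (ContDiff.contDiffOn (by fun_prop)) fun y hy => mul_mem_posOrth hs hy
  exact h_comp.congr fun y => scaledCost_apply q s

theorem IsCostFun.measurable_scaledCost (hq : IsCostFun n q) {s : Fin n → ℝ}
    (hs : s ∈ posOrth n) : Measurable (scaledCost q s) := by
  classical
  rw [scaledCost, ← piecewise_eq_indicator]
  have h_comp : ContinuousOn (fun y => q (s * y)) (posOrth n) :=
    hq.continuousOn.comp (by fun_prop) fun y hy => mul_mem_posOrth hs hy
  exact h_comp.measurable_piecewise continuousOn_const (measurableSet_posOrth n)

theorem IsCostFun.isCostFun_scaledCost (hq : IsCostFun n q) {s : Fin n → ℝ}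
    (hs : s ∈ posOrth n) : IsCostFun n (scaledCost q s) := by
  obtain ⟨R, hR, h_le⟩ := hq.exists_le_mul
  have h_bound : ∀ y ∈ posOrth n, ∀ i, y i ≤ (∑ j, R / s j) * scaledCost q s y := fun y hy i => by
    have hsy := mul_mem_posOrth hs hy
    rw [scaledCost_apply q s hy]
    calc y i = s i * y i / s i := by rw [mul_div_cancel_left₀ _ (hs i).ne']
      _ ≤ R * q (s * y) / s i := div_le_div_of_nonneg_right (h_le _ hsy i) (hs i).le
      _ = R / s i * q (s * y) := by ring
      _ ≤ (∑ j, R / s j) * q (s * y) := by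
        gcongr
        · exact (hq.pos hsy).le
        · exact Finset.single_le_sum (fun j _ => (div_pos hR (hs j)).le) (Finset.mem_univ i)
  refine ⟨hq.contDiffOn_scaledCost hs, fun y hy => ?_, fun t ht y hy => ?_,
    isBounded_levelSet_of_le_mul h_bound⟩
  · rw [scaledCost_apply q s hy]
    exact hq.pos (mul_mem_posOrth hs hy)
  · change scaledCost q s (t • y) = _
    rw [scaledCost_apply q s (smul_mem_posOrth ht hy), scaledCost_apply q s hy, mul_smul_comm,
      hq.map_smul ht (mul_mem_posOrth hs hy)]

variable {q : (Fin (k + 1) → ℝ) → ℝ} {φ : (Fin m → ℝ) → ℝ}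

theorem nestedCost_append (q : (Fin (k + 1) → ℝ) → ℝ) (φ : (Fin m → ℝ) → ℝ) (x : Fin k → ℝ)
    (y : Fin m → ℝ) : nestedCost k m q φ (Fin.append x y) = q (Fin.snoc x (φ y)) := by
  simp [nestedCost]

theorem IsCostFun.snoc_comp_mem_posOrth (hφ : IsCostFun m φ) {v : Fin (k + m) → ℝ}
    (hv : v ∈ posOrth (k + m)) :
    (Fin.snoc (fun i => v (Fin.castAdd m i)) (φ fun j => v (Fin.natAdd k j)) : Fin (k + 1) → ℝ) ∈
      posOrth (k + 1) :=
  snoc_mem_posOrth (fun _ => hv _) (hφ.pos fun _ => hv _)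

theorem contDiffOn_nestedCost (hq : IsCostFun (k + 1) q) (hφ : IsCostFun m φ) :
    ContDiffOn ℝ 1 (nestedCost k m q φ) (posOrth (k + m)) := by
  refine hq.1.comp (contDiffOn_pi.2 fun i => ?_) fun v hv => hφ.snoc_comp_mem_posOrth hv
  induction i using Fin.lastCases with
  | last =>
    simp only [Fin.snoc_last]
    exact hφ.1.comp (ContDiff.contDiffOn (by fun_prop)) fun v hv _ => hv _
  | cast i =>
    simp only [Fin.snoc_castSucc]
    exact ContDiff.contDiffOn (by fun_prop)

theorem nestedCost_smul (hq : IsCostFun (k + 1) q) (hφ : IsCostFun m φ) {t : ℝ} (ht : 0 < t)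
    {v : Fin (k + m) → ℝ} (hv : v ∈ posOrth (k + m)) :
    nestedCost k m q φ (t • v) = t * nestedCost k m q φ v := by
  have h_inner : φ (t • fun j => v (Fin.natAdd k j)) = t * φ fun j => v (Fin.natAdd k j) :=
    hφ.map_smul ht fun _ => hv _
  rw [nestedCost, nestedCost, ← hq.map_smul ht (hφ.snoc_comp_mem_posOrth hv)]
  congr 1
  ext i
  induction i using Fin.lastCases with
  | last => simpa using! h_inner
  | cast i => simp

theorem exists_le_mul_nestedCost (hq : IsCostFun (k + 1) q) (hφ : IsCostFun m φ) :
    ∃ R, ∀ v ∈ posOrth (k + m), ∀ i, v i ≤ R * nestedCost k m q φ v := by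
  obtain ⟨R, -, h_le⟩ := hq.exists_le_mul
  obtain ⟨R', hR', h_le'⟩ := hφ.exists_le_mul
  refine ⟨max R (R' * R), fun v hv i => ?_⟩
  have h_mem := hφ.snoc_comp_mem_posOrth hv
  have h_pos : 0 < nestedCost k m q φ v := hq.pos h_mem
  induction i using Fin.addCases with
  | left i =>
    calc v (Fin.castAdd m i) ≤ R * nestedCost k m q φ v := by
          simpa using! h_le _ h_mem (Fin.castSucc i)
      _ ≤ max R (R' * R) * nestedCost k m q φ v := by gcongr; exact le_max_left _ _
  | right j =>
    have h_last : φ (fun j => v (Fin.natAdd k j)) ≤ R * nestedCost k m q φ v := by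
      simpa using! h_le _ h_mem (Fin.last k)
    calc v (Fin.natAdd k j) ≤ R' * φ fun j => v (Fin.natAdd k j) :=
          h_le' (fun j => v (Fin.natAdd k j)) (fun _ => hv _) j
      _ ≤ R' * (R * nestedCost k m q φ v) := by gcongr
      _ = R' * R * nestedCost k m q φ v := (mul_assoc _ _ _).symm
      _ ≤ max R (R' * R) * nestedCost k m q φ v := by gcongr; exact le_max_right _ _

theorem isCostFun_nestedCost (hq : IsCostFun (k + 1) q) (hφ : IsCostFun m φ) :
    IsCostFun (k + m) (nestedCost k m q φ) := by
  obtain ⟨R, h_le⟩ := exists_le_mul_nestedCost hq hφ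
  exact ⟨contDiffOn_nestedCost hq hφ, fun v hv => hq.pos (hφ.snoc_comp_mem_posOrth hv),
    fun t ht v hv => nestedCost_smul hq hφ ht hv, isBounded_levelSet_of_le_mul h_le⟩

end CostFunctions

section Integrability

variable {n : ℕ} {r : ℝ≥0∞} {b c : Fin n → ℝ} {S : Set (Fin n → ℝ)} {g q : (Fin n → ℝ) → ℝ}

/-- The box `(0, b₁] × ⋯ × (0, b_n]`. -/
def posBox (b : Fin n → ℝ) : Set (Fin n → ℝ) := univ.pi fun i => Ioc 0 (b i)

theorem measurableSet_posBox (b : Fin n → ℝ) : MeasurableSet (posBox b) :=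
  MeasurableSet.univ_pi fun _ => measurableSet_Ioc

/-- The measure `x^c dx / x` on `S`. -/
def monomialMeasure (c : Fin n → ℝ) (S : Set (Fin n → ℝ)) : Measure (Fin n → ℝ) :=
  ((mulHaarPi n).restrict S).withDensity fun x => ENNReal.ofReal (vecPow x c)

theorem lintegral_rpow_Ioc_mulHaar_lt_top {a : ℝ} (ha : 0 < a) (b : ℝ) :
    ∫⁻ t in Ioc 0 b, ENNReal.ofReal (t ^ a) ∂mulHaar < ⊤ := by
  have h_int : IntegrableOn (fun t : ℝ => t ^ (a - 1)) (Ioc 0 b) := by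
    rcases le_total b 0 with hb | hb
    · simp [Ioc_eq_empty_of_le hb]
    · exact (intervalIntegrable_iff_integrableOn_Ioc_of_le hb).1
        (intervalIntegral.intervalIntegrable_rpow' (by linarith))
  calc ∫⁻ t in Ioc 0 b, ENNReal.ofReal (t ^ a) ∂mulHaar
      = ∫⁻ t in Ioc 0 b, ENNReal.ofReal t⁻¹ * ENNReal.ofReal (t ^ a) := by
        rw [mulHaar, setLIntegral_withDensity_eq_setLIntegral_mul _ (by fun_prop) (by fun_prop)
          measurableSet_Ioc, Measure.restrict_restrict measurableSet_Ioc,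
          inter_eq_left.2 Ioc_subset_Ioi_self]
        rfl
    _ = ∫⁻ t in Ioc 0 b, ENNReal.ofReal (t ^ (a - 1)) := by
        refine setLIntegral_congr_fun measurableSet_Ioc fun t ht => ?_
        rw [← ENNReal.ofReal_mul (inv_nonneg.2 ht.1.le), Real.rpow_sub_one ht.1.ne', mul_comm,
          div_eq_mul_inv]
    _ < ⊤ := h_int.lintegral_lt_top

theorem lintegral_vecPow_posBox_lt_top (hc : ∀ i, 0 < c i) (b : Fin n → ℝ) :
    ∫⁻ x in posBox b, ENNReal.ofReal (vecPow x c) ∂mulHaarPi n < ⊤ := by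
  calc ∫⁻ x in posBox b, ENNReal.ofReal (vecPow x c) ∂mulHaarPi n
      = ∫⁻ x in posBox b, ∏ i, ENNReal.ofReal (x i ^ c i) ∂mulHaarPi n :=
        setLIntegral_congr_fun (measurableSet_posBox b) fun x hx =>
          ENNReal.ofReal_prod_of_nonneg fun i _ => Real.rpow_nonneg (hx i trivial).1.le _
    _ = ∏ i, ∫⁻ t in Ioc 0 (b i), ENNReal.ofReal (t ^ c i) ∂mulHaar := by
        rw [posBox, mulHaarPi, Measure.restrict_pi_pi]
        exact lintegral_fin_prod_eq_prod (f := fun i t => ENNReal.ofReal (t ^ c i)) _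
          fun i => by fun_prop
    _ < ⊤ := ENNReal.prod_lt_top fun i _ => lintegral_rpow_Ioc_mulHaar_lt_top (hc i) (b i)

theorem isFiniteMeasure_monomialMeasure (hc : ∀ i, 0 < c i) (hSb : S ⊆ posBox b) :
    IsFiniteMeasure (monomialMeasure c S) :=
  isFiniteMeasure_withDensity
    ((lintegral_mono_set hSb).trans_lt (lintegral_vecPow_posBox_lt_top hc b)).ne

theorem monomialMeasure_le (hc : ∀ i, 0 ≤ c i) (hS : MeasurableSet S) (hSb : S ⊆ posBox b) :
    monomialMeasure c S ≤ ENNReal.ofReal (vecPow b c) • mulHaarPi n := by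
  calc monomialMeasure c S
      ≤ ((mulHaarPi n).restrict S).withDensity fun _ => ENNReal.ofReal (vecPow b c) := by
        refine withDensity_mono ((ae_restrict_mem hS).mono fun x hx => ?_)
        exact ENNReal.ofReal_le_ofReal (vecPow_le_vecPow (fun i => (hSb hx i trivial).1)
          (fun i => (hSb hx i trivial).2) hc)
    _ ≤ ENNReal.ofReal (vecPow b c) • mulHaarPi n := by
        rw [withDensity_const]
        gcongr
        exact Measure.restrict_le_self

theorem integrableOn_posBox_vecPow_mul (hr : 1 ≤ r) (hc : ∀ i, 0 < c i)
    (hg : MemLp g r (mulHaarPi n)) (b : Fin n → ℝ) :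
    IntegrableOn (fun x => vecPow x c * g x) (posBox b) (mulHaarPi n) := by
  have := isFiniteMeasure_monomialMeasure hc (Subset.refl (posBox b))
  have h_int : Integrable g (monomialMeasure c (posBox b)) :=
    (hg.of_measure_le_smul ENNReal.ofReal_ne_top
      (monomialMeasure_le (fun i => (hc i).le) (measurableSet_posBox b) Subset.rfl)).integrable hr
  rw [monomialMeasure, integrable_withDensity_iff_integrable_smul'
    (measurable_vecPow c).ennreal_ofReal (by simp)] at h_int
  refine h_int.congr ((ae_restrict_mem (measurableSet_posBox b)).mono fun x hx => ?_)
  have hx_pos : x ∈ posOrth n := fun i => (hx i trivial).1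
  simp [ENNReal.toReal_ofReal (vecPow_pos hx_pos c).le]

theorem IsCostFun.exists_kernel_le_indicator (hq : IsCostFun n q) :
    ∃ R : ℝ, ∀ p0, 0 < p0 → ∀ a ∈ posOrth n, ∀ p, a ≤ p → ∀ x ∈ posOrth n,
      max 0 (p0 - q (p * x)) ≤ (posBox fun i => R * p0 / a i).indicator (fun _ => p0) x := by
  obtain ⟨R, hR, h_le⟩ := hq.exists_le_mul
  refine ⟨R, fun p0 hp0 a ha p hap x hx => ?_⟩
  have hpx := mul_mem_posOrth (fun i => (ha i).trans_le (hap i)) hx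
  by_cases hx_box : x ∈ posBox fun i => R * p0 / a i
  · rw [indicator_of_mem hx_box]
    exact max_le hp0.le (by linarith [hq.pos hpx])
  · rw [indicator_of_notMem hx_box]
    refine max_le le_rfl (sub_nonpos.2 (le_of_not_gt fun hlt => hx_box fun i _ => ⟨hx i, ?_⟩))
    rw [le_div_iff₀ (ha i), mul_comm]
    calc a i * x i ≤ p i * x i := mul_le_mul_of_nonneg_right (hap i) (hx i).le
      _ ≤ R * q (p * x) := h_le _ hpx i
      _ ≤ R * p0 := by gcongr

theorem IsCostFun.aestronglyMeasurable_kernel_mul (hq : IsCostFun n q)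
    (hg : AEStronglyMeasurable g (mulHaarPi n)) (c : Fin n → ℝ) (p0 : ℝ) {p : Fin n → ℝ}
    (hp : p ∈ posOrth n) :
    AEStronglyMeasurable (fun x => max 0 (p0 - q (p * x)) * (vecPow x c * g x)) (mulHaarPi n) := by
  refine .mul ?_ ((measurable_vecPow c).aestronglyMeasurable.mul hg)
  have h_cont : ContinuousOn (fun x => max 0 (p0 - q (p * x))) (posOrth n) :=
    ContinuousOn.sup continuousOn_const (continuousOn_const.sub
      (hq.continuousOn.comp (by fun_prop) fun x hx => mul_mem_posOrth hp hx))
  exact aestronglyMeasurable_mulHaarPi_iff.2 (h_cont.aestronglyMeasurable (measurableSet_posOrth n))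

theorem IsCostFun.exists_integrable_bound (hq : IsCostFun n q) (hr : 1 ≤ r) (hc : ∀ i, 0 < c i)
    (hg : MemLp g r (mulHaarPi n)) {p0 : ℝ} (hp0 : 0 < p0) {a : Fin n → ℝ} (ha : a ∈ posOrth n) :
    ∃ F, Integrable F (mulHaarPi n) ∧ ∀ p, a ≤ p →
      ∀ᵐ x ∂mulHaarPi n, ‖max 0 (p0 - q (p * x)) * (vecPow x c * g x)‖ ≤ F x := by
  obtain ⟨R, h_kernel⟩ := hq.exists_kernel_le_indicator
  let box := posBox fun i => R * p0 / a i
  refine ⟨fun x => p0 * box.indicator (fun x => ‖vecPow x c * g x‖) x,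
    ((integrable_indicator_iff (measurableSet_posBox _)).2
      (integrableOn_posBox_vecPow_mul hr hc hg _).norm).const_mul p0, fun p hap => ?_⟩
  filter_upwards [ae_mulHaarPi_mem_posOrth n] with x hx
  calc ‖max 0 (p0 - q (p * x)) * (vecPow x c * g x)‖
      = max 0 (p0 - q (p * x)) * ‖vecPow x c * g x‖ := by
        rw [norm_mul, Real.norm_of_nonneg (le_max_left _ _)]
    _ ≤ box.indicator (fun _ => p0) x * ‖vecPow x c * g x‖ := by
        gcongr
        exact h_kernel p0 hp0 a ha p hap x hx
    _ = p0 * box.indicator (fun x => ‖vecPow x c * g x‖) x := by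
        by_cases hx_box : x ∈ box <;> simp [hx_box]

theorem IsCostFun.integrable_kernel_mul (hq : IsCostFun n q) (hr : 1 ≤ r) (hc : ∀ i, 0 < c i)
    (hg : MemLp g r (mulHaarPi n)) {p0 : ℝ} (hp0 : 0 < p0) {p : Fin n → ℝ} (hp : p ∈ posOrth n) :
    Integrable (fun x => max 0 (p0 - q (p * x)) * (vecPow x c * g x)) (mulHaarPi n) := by
  obtain ⟨F, hF, h_bound⟩ := hq.exists_integrable_bound hr hc hg hp0 hp
  exact hF.mono' (hq.aestronglyMeasurable_kernel_mul hg.1 c p0 hp) (h_bound p le_rfl)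

theorem IsCostFun.integrable_kernel_mul_of_measurePreserving {X : Type*} [MeasurableSpace X]
    {ν : Measure X} (hq : IsCostFun n q) (hr : 1 ≤ r) (hc : ∀ i, 0 < c i) (e : X ≃ᵐ (Fin n → ℝ))
    (he : MeasurePreserving e ν (mulHaarPi n)) {g : X → ℝ} (hg : MemLp g r ν) {p0 : ℝ}
    (hp0 : 0 < p0) {p : Fin n → ℝ} (hp : p ∈ posOrth n) :
    Integrable (fun z => max 0 (p0 - q (p * e z)) * (vecPow (e z) c * g z)) ν := by
  have h_int := hq.integrable_kernel_mul hr hc (hg.comp_measurePreserving he.symm) hp0 hp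
  simpa [Function.comp_def] using he.integrable_comp_of_integrable h_int

theorem IsCostFun.continuousOn_haarProfit (hq : IsCostFun n q) (hr : 1 ≤ r) (hc : ∀ i, 0 < c i)
    (hg : MemLp g r (mulHaarPi n)) {p0 : ℝ} (hp0 : 0 < p0) :
    ContinuousOn (haarProfit q c g p0) (posOrth n) := by
  intro p hp
  have h_half : (2⁻¹ : ℝ) • p ∈ posOrth n := smul_mem_posOrth (by positivity) hp
  obtain ⟨F, hF, h_bound⟩ := hq.exists_integrable_bound hr hc hg hp0 h_half
  have h_near : ∀ᶠ p' in nhdsWithin p (posOrth n), (2⁻¹ : ℝ) • p ≤ p' := by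
    refine nhdsWithin_le_nhds (Filter.eventually_all.2 fun i => ?_)
    refine (continuous_apply i).continuousAt.eventually_const_le ?_
    change 2⁻¹ * p i < p i
    linarith [hp i]
  refine tendsto_integral_filter_of_dominated_convergence F
    (eventually_mem_nhdsWithin.mono fun p' hp' =>
      hq.aestronglyMeasurable_kernel_mul hg.1 c p0 hp') (h_near.mono h_bound) hF ?_
  filter_upwards [ae_mulHaarPi_mem_posOrth n] with x hx
  have h_cont : ContinuousAt q (p * x) :=
    hq.continuousOn.continuousAt ((isOpen_posOrth n).mem_nhds (mul_mem_posOrth hp hx))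
  have h_kernel : ContinuousAt (fun p' => max 0 (p0 - q (p' * x))) p :=
    continuousAt_const.sup
      (continuousAt_const.sub (h_cont.comp (f := fun p' => p' * x) (by fun_prop)))
  exact (h_kernel.mul continuousAt_const).continuousWithinAt

end Integrability

section PolarCoordinates

variable {m : ℕ} {ψ : (Fin m → ℝ) → ℝ} {d : Fin m → ℝ}

/-- The map `(t, y) ↦ (t / ψ(y)) y`: for `ψ` homogeneous of degree one, the multiple of `y` at
which `ψ` takes the value `t`. -/
def radialMap (ψ : (Fin m → ℝ) → ℝ) (z : ℝ × (Fin m → ℝ)) : Fin m → ℝ := (z.1 / ψ z.2) • z.2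

theorem measurable_radialMap (hψ : Measurable ψ) : Measurable (radialMap ψ) := by
  unfold radialMap
  fun_prop

theorem IsCostFun.apply_radialMap (hψ : IsCostFun m ψ) {t : ℝ} (ht : 0 < t) {y : Fin m → ℝ}
    (hy : y ∈ posOrth m) : ψ (radialMap ψ (t, y)) = t := by
  rw [radialMap, hψ.map_smul (div_pos ht (hψ.pos hy)) hy, div_mul_cancel₀ _ (hψ.pos hy).ne']

theorem lintegral_radialMap_eq_lintegral_smul {h : (Fin m → ℝ) → ℝ≥0∞} (hh : Measurable h)
    {y : Fin m → ℝ} (hy : 0 < ψ y) :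
    ∫⁻ t, h (radialMap ψ (t, y)) ∂mulHaar = ∫⁻ u, h (u • y) ∂mulHaar := by
  have h_meas : Measurable fun u : ℝ => h (u • y) := by fun_prop
  rw [← (measurePreserving_mul_mulHaar (inv_pos.2 hy)).lintegral_comp h_meas]
  simp only [radialMap, div_eq_inv_mul]

theorem lintegral_mul_comp_smul_mulHaarPi {h w : (Fin m → ℝ) → ℝ≥0∞} (hh : Measurable h)
    (hw : Measurable w) {u : ℝ} (hu : 0 < u) :
    ∫⁻ y, w y * h (u • y) ∂mulHaarPi m = ∫⁻ z, w (u⁻¹ • z) * h z ∂mulHaarPi m := by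
  have h_meas : Measurable fun z => w (u⁻¹ • z) * h z := by fun_prop
  rw [← (measurePreserving_smul_mulHaarPi hu).lintegral_comp h_meas]
  simp only [inv_smul_smul₀ hu.ne']

theorem map_radialMap_prod_withDensity (hψ : Measurable ψ) (hψ_pos : ∀ y ∈ posOrth m, 0 < ψ y)
    {w : (Fin m → ℝ) → ℝ≥0∞} (hw : Measurable w) :
    (mulHaar.prod ((mulHaarPi m).withDensity w)).map (radialMap ψ) =
      (mulHaarPi m).withDensity fun z => ∫⁻ u, w (u⁻¹ • z) ∂mulHaar := by
  refine Measure.ext_of_lintegral _ fun h hh => ?_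
  have hT := measurable_radialMap hψ
  have h_smul : Measurable fun y => ∫⁻ u, h (u • y) ∂mulHaar :=
    Measurable.lintegral_prod_left' (f := fun z : ℝ × (Fin m → ℝ) => h (z.1 • z.2)) (by fun_prop)
  have h_weight : Measurable fun z => ∫⁻ u, w (u⁻¹ • z) ∂mulHaar :=
    Measurable.lintegral_prod_left' (f := fun z : ℝ × (Fin m → ℝ) => w (z.1⁻¹ • z.2)) (by fun_prop)
  calc ∫⁻ z, h z ∂(mulHaar.prod ((mulHaarPi m).withDensity w)).map (radialMap ψ)
      = ∫⁻ y, ∫⁻ t, h (radialMap ψ (t, y)) ∂mulHaar ∂(mulHaarPi m).withDensity w := by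
        rw [lintegral_map hh hT]
        exact lintegral_prod_symm' _ (hh.comp hT)
    _ = ∫⁻ y, ∫⁻ u, h (u • y) ∂mulHaar ∂(mulHaarPi m).withDensity w := by
        refine lintegral_congr_ae ((withDensity_absolutelyContinuous _ w).ae_le ?_)
        filter_upwards [ae_mulHaarPi_mem_posOrth m] with y hy
        exact lintegral_radialMap_eq_lintegral_smul hh (hψ_pos y hy)
    _ = ∫⁻ y, ∫⁻ u, w y * h (u • y) ∂mulHaar ∂mulHaarPi m := by
        rw [lintegral_withDensity_eq_lintegral_mul _ hw h_smul]
        refine lintegral_congr fun y => ?_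
        rw [lintegral_const_mul _ (by fun_prop), Pi.mul_apply]
    _ = ∫⁻ u, ∫⁻ y, w y * h (u • y) ∂mulHaarPi m ∂mulHaar :=
        lintegral_lintegral_swap (Measurable.aemeasurable (by fun_prop))
    _ = ∫⁻ u, ∫⁻ z, w (u⁻¹ • z) * h z ∂mulHaarPi m ∂mulHaar :=
        lintegral_congr_ae (ae_mulHaar_pos.mono fun u hu =>
          lintegral_mul_comp_smul_mulHaarPi hh hw hu)
    _ = ∫⁻ z, ∫⁻ u, w (u⁻¹ • z) * h z ∂mulHaar ∂mulHaarPi m :=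
        lintegral_lintegral_swap (Measurable.aemeasurable (by fun_prop))
    _ = ∫⁻ z, h z ∂(mulHaarPi m).withDensity fun z => ∫⁻ u, w (u⁻¹ • z) ∂mulHaar := by
        rw [lintegral_withDensity_eq_lintegral_mul _ h_weight hh]
        refine lintegral_congr fun z => ?_
        rw [lintegral_mul_const _ (by fun_prop), Pi.mul_apply]

theorem lintegral_rpow_neg_Ici_mulHaar {a D : ℝ} (ha : 0 < a) (hD : 0 < D) :
    ∫⁻ u in Ici a, ENNReal.ofReal (u ^ (-D)) ∂mulHaar = ENNReal.ofReal (a ^ (-D) / D) := by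
  calc ∫⁻ u in Ici a, ENNReal.ofReal (u ^ (-D)) ∂mulHaar
      = ∫⁻ u in Ioi a, ENNReal.ofReal u⁻¹ * ENNReal.ofReal (u ^ (-D)) := by
        rw [mulHaar, setLIntegral_withDensity_eq_setLIntegral_mul _ (by fun_prop) (by fun_prop)
          measurableSet_Ici, Measure.restrict_restrict measurableSet_Ici,
          inter_eq_left.2 (Ici_subset_Ioi.2 ha), restrict_Ioi_eq_restrict_Ici]
        rfl
    _ = ∫⁻ u in Ioi a, ENNReal.ofReal (u ^ (-D - 1)) := by
        refine setLIntegral_congr_fun measurableSet_Ioi fun u hu => ?_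
        have hu_pos : 0 < u := ha.trans hu
        rw [← ENNReal.ofReal_mul (inv_nonneg.2 hu_pos.le), Real.rpow_sub_one hu_pos.ne', mul_comm,
          div_eq_mul_inv]
    _ = ENNReal.ofReal (∫ u in Ioi a, u ^ (-D - 1)) :=
        (ofReal_integral_eq_lintegral_ofReal (integrableOn_Ioi_rpow_of_lt (by linarith) ha)
          ((ae_restrict_mem measurableSet_Ioi).mono fun u hu =>
            Real.rpow_nonneg (ha.trans hu).le _)).symm
    _ = ENNReal.ofReal (a ^ (-D) / D) := by
        rw [integral_Ioi_rpow_of_lt (by linarith) ha, sub_add_cancel, neg_div_neg_eq]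

/-- The region `{y ∈ ℝ^m_+ | ψ(y) ≤ 1}`. -/
def unitSublevel (ψ : (Fin m → ℝ) → ℝ) : Set (Fin m → ℝ) := {y | y ∈ posOrth m ∧ ψ y ≤ 1}

theorem measurableSet_unitSublevel (hψ : Measurable ψ) : MeasurableSet (unitSublevel ψ) :=
  (measurableSet_posOrth m).inter (measurableSet_le hψ measurable_const)

/-- The measure `y^d dy / y` on `{ψ ≤ 1}`. As `radialMap ψ (t, y)` depends on `y` only through
its direction, it plays the role of the angular measure in polar coordinates. -/
def angularMeasure (ψ : (Fin m → ℝ) → ℝ) (d : Fin m → ℝ) : Measure (Fin m → ℝ) :=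
  monomialMeasure d (unitSublevel ψ)

instance sFinite_angularMeasure : SFinite (angularMeasure ψ d) :=
  inferInstanceAs (SFinite (Measure.withDensity _ _))

theorem ae_angularMeasure_mem_posOrth : ∀ᵐ y ∂angularMeasure ψ d, y ∈ posOrth m :=
  (withDensity_absolutelyContinuous _ _).ae_le
    (Measure.restrict_le_self.absolutelyContinuous.ae_le (ae_mulHaarPi_mem_posOrth m))

theorem IsCostFun.isFiniteMeasure_angularMeasure (hψ : IsCostFun m ψ) (hd : ∀ j, 0 < d j) :
    IsFiniteMeasure (angularMeasure ψ d) := by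
  obtain ⟨R, hR, h_le⟩ := hψ.exists_le_mul
  refine isFiniteMeasure_monomialMeasure (b := fun _ => R) hd fun y ⟨hy, hψy⟩ j _ => ⟨hy j, ?_⟩
  exact (h_le y hy j).trans (mul_le_of_le_one_right hR.le hψy)

/-- The density of polar coordinates: `radialMap ψ` carries the product of `dt / t` and the
angular measure to the measure with this density with respect to the multiplicative Haar measure. -/
def radialDensity (ψ : (Fin m → ℝ) → ℝ) (d z : Fin m → ℝ) : ℝ :=
  vecPow z d * ψ z ^ (-∑ j, d j) / ∑ j, d j

theorem IsCostFun.inv_smul_mem_unitSublevel_iff (hψ : IsCostFun m ψ) {u : ℝ} (hu : 0 < u)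
    {z : Fin m → ℝ} (hz : z ∈ posOrth m) : u⁻¹ • z ∈ unitSublevel ψ ↔ ψ z ≤ u := by
  have h_mem := smul_mem_posOrth (inv_pos.2 hu) hz
  simp only [unitSublevel, mem_ofPred_eq, h_mem, true_and, hψ.map_smul (inv_pos.2 hu) hz,
    inv_mul_le_one₀ hu]

theorem IsCostFun.lintegral_indicator_unitSublevel_vecPow (hψ : IsCostFun m ψ)
    (hD : 0 < ∑ j, d j) {z : Fin m → ℝ} (hz : z ∈ posOrth m) :
    ∫⁻ u, (unitSublevel ψ).indicator (fun y => ENNReal.ofReal (vecPow y d)) (u⁻¹ • z) ∂mulHaar =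
      ENNReal.ofReal (radialDensity ψ d z) := by
  have h_integrand : ∀ᵐ u ∂mulHaar,
      (unitSublevel ψ).indicator (fun y => ENNReal.ofReal (vecPow y d)) (u⁻¹ • z) =
        ENNReal.ofReal (vecPow z d) *
          (Ici (ψ z)).indicator (fun u => ENNReal.ofReal (u ^ (-∑ j, d j))) u := by
    filter_upwards [ae_mulHaar_pos] with u hu
    by_cases hzu : ψ z ≤ u
    · rw [indicator_of_mem ((hψ.inv_smul_mem_unitSublevel_iff hu hz).2 hzu),
        indicator_of_mem (mem_Ici.2 hzu), vecPow_smul_left (inv_pos.2 hu) hz,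
        Real.inv_rpow hu.le, ← Real.rpow_neg hu.le, mul_comm,
        ENNReal.ofReal_mul (vecPow_pos hz d).le]
    · rw [indicator_of_notMem (mt (hψ.inv_smul_mem_unitSublevel_iff hu hz).1 hzu),
        indicator_of_notMem (mt mem_Ici.1 hzu), mul_zero]
  rw [lintegral_congr_ae h_integrand, lintegral_const_mul _
      (Measurable.indicator (by fun_prop) measurableSet_Ici), lintegral_indicator measurableSet_Ici,
    lintegral_rpow_neg_Ici_mulHaar (hψ.pos hz) hD, ← ENNReal.ofReal_mul (vecPow_pos hz d).le,
    radialDensity, mul_div_assoc]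

theorem IsCostFun.map_radialMap_prod_angularMeasure (hψ : IsCostFun m ψ) (hψm : Measurable ψ)
    (hD : 0 < ∑ j, d j) :
    (mulHaar.prod (angularMeasure ψ d)).map (radialMap ψ) =
      (mulHaarPi m).withDensity fun z => ENNReal.ofReal (radialDensity ψ d z) := by
  have hS := measurableSet_unitSublevel hψm
  rw [angularMeasure, monomialMeasure, ← withDensity_indicator hS,
    map_radialMap_prod_withDensity hψm (fun y => hψ.pos)
      ((measurable_vecPow d).ennreal_ofReal.indicator hS)]
  exact withDensity_congr_ae ((ae_mulHaarPi_mem_posOrth m).mono fun z hz =>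
    hψ.lintegral_indicator_unitSublevel_vecPow hD hz)

theorem measurable_radialDensity (hψm : Measurable ψ) :
    Measurable (radialDensity ψ d) :=
  ((measurable_vecPow d).mul (hψm.pow_const _)).div_const _

theorem IsCostFun.radialDensity_pos (hψ : IsCostFun m ψ) (hD : 0 < ∑ j, d j) {z : Fin m → ℝ}
    (hz : z ∈ posOrth m) : 0 < radialDensity ψ d z :=
  div_pos (mul_pos (vecPow_pos hz d) (Real.rpow_pos_of_pos (hψ.pos hz) _)) hD

theorem IsCostFun.integrable_map_radialMap_iff (hψ : IsCostFun m ψ) (hψm : Measurable ψ)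
    (hD : 0 < ∑ j, d j) {F : (Fin m → ℝ) → ℝ} :
    Integrable F ((mulHaar.prod (angularMeasure ψ d)).map (radialMap ψ)) ↔
      Integrable (fun z => radialDensity ψ d z * F z) (mulHaarPi m) := by
  rw [hψ.map_radialMap_prod_angularMeasure hψm hD,
    integrable_withDensity_iff_integrable_smul'
      (measurable_radialDensity hψm).ennreal_ofReal (by simp)]
  exact integrable_congr ((ae_mulHaarPi_mem_posOrth m).mono fun z hz => by
    simp only [ENNReal.toReal_ofReal (hψ.radialDensity_pos hD hz).le, smul_eq_mul])

theorem IsCostFun.integral_map_radialMap (hψ : IsCostFun m ψ) (hψm : Measurable ψ)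
    (hD : 0 < ∑ j, d j) (F : (Fin m → ℝ) → ℝ) :
    ∫ z, F z ∂(mulHaar.prod (angularMeasure ψ d)).map (radialMap ψ) =
      ∫ z, radialDensity ψ d z * F z ∂mulHaarPi m := by
  rw [hψ.map_radialMap_prod_angularMeasure hψm hD,
    integral_withDensity_eq_integral_toReal_smul
      (measurable_radialDensity hψm).ennreal_ofReal (by simp)]
  exact integral_congr_ae ((ae_mulHaarPi_mem_posOrth m).mono fun z hz => by
    simp only [ENNReal.toReal_ofReal (hψ.radialDensity_pos hD hz).le, smul_eq_mul])

theorem IsCostFun.exists_radialDensity_le (hψ : IsCostFun m ψ) (hd : ∀ j, 0 ≤ d j) :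
    ∃ C : ℝ, ∀ z ∈ posOrth m, radialDensity ψ d z ≤ C := by
  obtain ⟨R, hR, h_le⟩ := hψ.exists_le_mul
  refine ⟨vecPow (fun _ => R) d / ∑ j, d j, fun z hz => ?_⟩
  have hψz := hψ.pos hz
  refine div_le_div_of_nonneg_right ?_ (Finset.sum_nonneg fun j _ => hd j)
  rw [Real.rpow_neg hψz.le, ← div_eq_mul_inv, div_le_iff₀ (Real.rpow_pos_of_pos hψz _), mul_comm,
    ← vecPow_smul_left hψz fun _ => hR]
  exact vecPow_le_vecPow hz (fun j => (h_le z hz j).trans_eq (mul_comm _ _)) hd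

theorem IsCostFun.exists_map_radialMap_le_smul (hψ : IsCostFun m ψ) (hψm : Measurable ψ)
    (hd : ∀ j, 0 < d j) :
    ∃ C : ℝ≥0∞, C ≠ ⊤ ∧
      (mulHaar.prod (angularMeasure ψ d)).map (radialMap ψ) ≤ C • mulHaarPi m := by
  obtain ⟨C, hC⟩ := hψ.exists_radialDensity_le fun j => (hd j).le
  refine ⟨ENNReal.ofReal C, ENNReal.ofReal_ne_top, ?_⟩
  rw [hψ.map_radialMap_prod_angularMeasure hψm (hψ.sum_pos hd), ← withDensity_const]
  exact withDensity_mono ((ae_mulHaarPi_mem_posOrth m).mono fun z hz =>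
    ENNReal.ofReal_le_ofReal (hC z hz))

end PolarCoordinates

section RadialAverage

variable {m : ℕ} {ψ : (Fin m → ℝ) → ℝ} {d : Fin m → ℝ} {r : ℝ≥0∞} {α : Type*}
  [MeasurableSpace α] {κ : Measure α}

/-- The average `G(x, t)` of `g(x, ·)` over the level set `{ψ = t}`, taken in the polar
coordinates `radialMap ψ`. -/
def radialAverage (ψ : (Fin m → ℝ) → ℝ) (d : Fin m → ℝ) (g : α × (Fin m → ℝ) → ℝ)
    (z : α × ℝ) : ℝ :=
  ∫ y, g (z.1, radialMap ψ (z.2, y)) ∂angularMeasure ψ d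

theorem IsCostFun.memLp_radialAverage [SFinite κ] (hψ : IsCostFun m ψ) (hψm : Measurable ψ)
    (hd : ∀ j, 0 < d j) (hr : 1 ≤ r) {g : α × (Fin m → ℝ) → ℝ}
    (hg : MemLp g r (κ.prod (mulHaarPi m))) :
    MemLp (radialAverage ψ d g) r (κ.prod mulHaar) := by
  obtain ⟨C, hC_top, hC⟩ := hψ.exists_map_radialMap_le_smul hψm hd
  have := hψ.isFiniteMeasure_angularMeasure hd
  have hT := measurable_radialMap hψm
  have h_map : (κ.prod (mulHaar.prod (angularMeasure ψ d))).map (Prod.map id (radialMap ψ)) ≤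
      C • κ.prod (mulHaarPi m) := by
    rw [← Measure.map_prod_map _ _ measurable_id hT, Measure.map_id, ← Measure.prod_smul_right]
    gcongr
  have h_polar : MemLp (g ∘ Prod.map id (radialMap ψ)) r
      (κ.prod (mulHaar.prod (angularMeasure ψ d))) :=
    (hg.of_measure_le_smul hC_top h_map).comp_of_map (measurable_id.prodMap hT).aemeasurable
  exact memLp_integral_section hr
    (h_polar.comp_measurePreserving (measurePreserving_prodAssoc κ mulHaar (angularMeasure ψ d)))

theorem IsCostFun.integral_mul_integral_radialMap (hψ : IsCostFun m ψ) (hψm : Measurable ψ)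
    (hD : 0 < ∑ j, d j) {K : ℝ → ℝ} {g : (Fin m → ℝ) → ℝ}
    (h_int : Integrable (fun y => K (ψ y) * (vecPow y d * g y)) (mulHaarPi m)) :
    ∫ t, K t * (t ^ (∑ j, d j) * ∫ y, g (radialMap ψ (t, y)) ∂angularMeasure ψ d) ∂mulHaar =
      (∑ j, d j)⁻¹ * ∫ y, K (ψ y) * (vecPow y d * g y) ∂mulHaarPi m := by
  set D := ∑ j, d j
  let F : (Fin m → ℝ) → ℝ := fun z => K (ψ z) * (ψ z ^ D * g z)
  have hT := measurable_radialMap hψm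
  have h_density : (fun z => radialDensity ψ d z * F z) =ᵐ[mulHaarPi m]
      fun z => D⁻¹ * (K (ψ z) * (vecPow z d * g z)) := by
    filter_upwards [ae_mulHaarPi_mem_posOrth m] with z hz
    have hψz := Real.rpow_pos_of_pos (hψ.pos hz) D
    change vecPow z d * ψ z ^ (-D) / D * (K (ψ z) * (ψ z ^ D * g z)) = _
    rw [Real.rpow_neg (hψ.pos hz).le]
    field_simp
  have hF : Integrable F ((mulHaar.prod (angularMeasure ψ d)).map (radialMap ψ)) :=
    (hψ.integrable_map_radialMap_iff hψm hD).2
      ((integrable_congr h_density).2 (h_int.const_mul _))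
  have h_level : ∀ᵐ t ∂mulHaar, ∫ y, F (radialMap ψ (t, y)) ∂angularMeasure ψ d =
      K t * (t ^ D * ∫ y, g (radialMap ψ (t, y)) ∂angularMeasure ψ d) := by
    filter_upwards [ae_mulHaar_pos] with t ht
    rw [← integral_const_mul, ← integral_const_mul]
    refine integral_congr_ae (ae_angularMeasure_mem_posOrth.mono fun y hy => ?_)
    simp only [F, hψ.apply_radialMap ht hy]
  calc ∫ t, K t * (t ^ D * ∫ y, g (radialMap ψ (t, y)) ∂angularMeasure ψ d) ∂mulHaar
      = ∫ t, ∫ y, F (radialMap ψ (t, y)) ∂angularMeasure ψ d ∂mulHaar :=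
        (integral_congr_ae h_level).symm
    _ = ∫ z, F z ∂(mulHaar.prod (angularMeasure ψ d)).map (radialMap ψ) := by
        rw [integral_map hT.aemeasurable hF.1]
        exact (integral_prod _ (hF.comp_measurable hT)).symm
    _ = D⁻¹ * ∫ y, K (ψ y) * (vecPow y d * g y) ∂mulHaarPi m := by
        rw [hψ.integral_map_radialMap hψm hD, integral_congr_ae h_density, integral_const_mul]

end RadialAverage

section NestedCost

variable {k m : ℕ} {q : (Fin (k + 1) → ℝ) → ℝ} {φ : (Fin m → ℝ) → ℝ} {r : ℝ≥0∞}
  {c : Fin k → ℝ} {d : Fin m → ℝ} {g : (Fin k → ℝ) × (Fin m → ℝ) → ℝ} {s : Fin m → ℝ}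

theorem nestedCost_append_smul_mul_append (q : (Fin (k + 1) → ℝ) → ℝ) (hφ : IsCostFun m φ)
    (p x : Fin k → ℝ) {τ : ℝ} (hτ : 0 < τ) {y : Fin m → ℝ} (hs : s ∈ posOrth m)
    (hy : y ∈ posOrth m) :
    nestedCost k m q φ (Fin.append p (τ • s) * Fin.append x y) =
      q (Fin.snoc p τ * Fin.snoc x (scaledCost φ s y)) := by
  have h_append : Fin.append p (τ • s) * Fin.append x y = Fin.append (p * x) (τ • (s * y)) := by
    ext i
    induction i using Fin.addCases <;> simp [mul_assoc]
  have h_snoc : (Fin.snoc p τ * Fin.snoc x (scaledCost φ s y) : Fin (k + 1) → ℝ) =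
      Fin.snoc (p * x) (τ * scaledCost φ s y) := by
    ext i
    induction i using Fin.lastCases <;> simp
  rw [h_append, nestedCost_append, h_snoc, hφ.map_smul hτ (mul_mem_posOrth hs hy),
    scaledCost_apply φ s hy]

theorem integral_kernel_mul_radialAverage (hq : IsCostFun (k + 1) q) (hφ : IsCostFun m φ)
    (hr : 1 ≤ r) (hc : ∀ i, 0 < c i) (hd : ∀ j, 0 < d j)
    (hg : MemLp g r ((mulHaarPi k).prod (mulHaarPi m))) (hs : s ∈ posOrth m) {p0 τ : ℝ}
    (hp0 : 0 < p0) (hτ : 0 < τ) {p : Fin k → ℝ} (hp : p ∈ posOrth k) :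
    ∫ z, max 0 (p0 - q (Fin.snoc p τ * snocMeasurableEquiv k z)) *
        (vecPow (snocMeasurableEquiv k z) (Fin.snoc c (∑ j, d j)) *
          radialAverage (scaledCost φ s) d g z) ∂(mulHaarPi k).prod mulHaar =
      (∑ j, d j)⁻¹ *
        ∫ z, max 0 (p0 - nestedCost k m q φ
            (Fin.append p (τ • s) * appendMeasurableEquiv k m z)) *
          (vecPow (appendMeasurableEquiv k m z) (Fin.append c d) * g z)
          ∂(mulHaarPi k).prod (mulHaarPi m) := by
  have hψ := hφ.isCostFun_scaledCost hs
  have hψm := hφ.measurable_scaledCost hs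
  have hD := hφ.sum_pos hd
  have h_outer := hq.integrable_kernel_mul_of_measurePreserving hr (snoc_mem_posOrth hc hD)
    _ (measurePreserving_snoc_mulHaarPi k) (hψ.memLp_radialAverage hψm hd hr hg) hp0
    (snoc_mem_posOrth hp hτ)
  have h_nested := (isCostFun_nestedCost hq hφ).integrable_kernel_mul_of_measurePreserving hr
    (append_mem_posOrth hc hd) _ (measurePreserving_append_mulHaarPi k m) hg hp0
    (append_mem_posOrth hp (smul_mem_posOrth hτ hs))
  rw [integral_prod _ h_outer, integral_prod _ h_nested, ← integral_const_mul]
  refine integral_congr_ae ?_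
  filter_upwards [h_nested.prod_right_ae] with x hx
  let K : ℝ → ℝ := fun t => max 0 (p0 - q (Fin.snoc p τ * Fin.snoc x t)) * vecPow x c
  have h_fiber : ∀ᵐ y ∂mulHaarPi m,
      max 0 (p0 - nestedCost k m q φ
          (Fin.append p (τ • s) * appendMeasurableEquiv k m (x, y))) *
        (vecPow (appendMeasurableEquiv k m (x, y)) (Fin.append c d) * g (x, y)) =
      K (scaledCost φ s y) * (vecPow y d * g (x, y)) := by
    filter_upwards [ae_mulHaarPi_mem_posOrth m] with y hy
    simp only [K, appendMeasurableEquiv_apply, vecPow_append,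
      nestedCost_append_smul_mul_append q hφ p x hτ hs hy]
    ring
  rw [integral_congr_ae h_fiber, ← hψ.integral_mul_integral_radialMap hψm hD (K := K)
    (g := fun y => g (x, y)) (hx.congr h_fiber)]
  refine integral_congr_ae (.of_forall fun t => ?_)
  simp only [K, radialAverage, snocMeasurableEquiv_apply, vecPow_snoc]
  ring

theorem radialAverage_ae_eq_zero (hq : IsCostFun (k + 1) q) (hφ : IsCostFun m φ)
    (hr : 1 ≤ r) (hc : ∀ i, 0 < c i) (hd : ∀ j, 0 < d j)
    (hqInj : PiqInj (k + 1) r q (Fin.snoc c (∑ j, d j)))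
    (hg : MemLp g r ((mulHaarPi k).prod (mulHaarPi m)))
    (h_zero : ∀ p0, 0 < p0 → ∀ p ∈ posOrth (k + m),
      ∫ z, max 0 (p0 - nestedCost k m q φ (p * appendMeasurableEquiv k m z)) *
        (vecPow (appendMeasurableEquiv k m z) (Fin.append c d) * g z)
        ∂(mulHaarPi k).prod (mulHaarPi m) = 0)
    (hs : s ∈ posOrth m) :
    radialAverage (scaledCost φ s) d g =ᵐ[(mulHaarPi k).prod mulHaar] 0 := by
  have h_memLp : MemLp (radialAverage (scaledCost φ s) d g) r ((mulHaarPi k).prod mulHaar) :=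
    (hφ.isCostFun_scaledCost hs).memLp_radialAverage (hφ.measurable_scaledCost hs) hd hr hg
  refine (piqInj_iff_of_measurePreserving (one_pos.trans_le hr).ne' _
    (measurePreserving_snoc_mulHaarPi k)).1 hqInj _ h_memLp fun p0 hp0 p hp => ?_
  have h_init : Fin.init p ∈ posOrth k := fun i => hp i.castSucc
  have h_last : 0 < p (Fin.last k) := hp _
  have h_average :=
    integral_kernel_mul_radialAverage hq hφ hr hc hd hg hs hp0 h_last h_init
  rwa [h_zero p0 hp0 _ (append_mem_posOrth h_init (smul_mem_posOrth h_last hs)), mul_zero,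
    Fin.snoc_init_self] at h_average

theorem haarProfit_eq_zero_of_radialAverage (hφ : IsCostFun m φ) (hr : 1 ≤ r)
    (hd : ∀ j, 0 < d j) (hs : s ∈ posOrth m) {h : (Fin m → ℝ) → ℝ} (hh : MemLp h r (mulHaarPi m))
    (h_avg : ∀ᵐ t ∂mulHaar,
      ∫ y, h (radialMap (scaledCost φ s) (t, y)) ∂angularMeasure (scaledCost φ s) d = 0)
    {p0 : ℝ} (hp0 : 0 < p0) : haarProfit φ d h p0 s = 0 := by
  have hD := hφ.sum_pos hd
  have h_scaled : ∀ᵐ y ∂mulHaarPi m, max 0 (p0 - φ (s * y)) * (vecPow y d * h y) =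
      max 0 (p0 - scaledCost φ s y) * (vecPow y d * h y) :=
    (ae_mulHaarPi_mem_posOrth m).mono fun y hy => by simp only [scaledCost_apply φ s hy]
  have h_polar := (hφ.isCostFun_scaledCost hs).integral_mul_integral_radialMap
    (hφ.measurable_scaledCost hs) hD (K := fun t => max 0 (p0 - t))
    ((hφ.integrable_kernel_mul hr hd hh hp0 hs).congr h_scaled)
  rw [integral_eq_zero_of_ae (h_avg.mono fun t ht => by simp only [ht, mul_zero, Pi.zero_apply]),
    ← integral_congr_ae h_scaled] at h_polar
  exact (mul_eq_zero.1 h_polar.symm).resolve_left (inv_pos.2 hD).ne'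

theorem eq_zero_of_haarProfit_eq_zero_on_dense (hφ : IsCostFun m φ) (hr : 1 ≤ r)
    (hd : ∀ j, 0 < d j) (hφInj : PiqInj m r φ d) {h : (Fin m → ℝ) → ℝ}
    (hh : MemLp h r (mulHaarPi m)) {A : Set (Fin m → ℝ)} (hA : Dense A)
    (h_zero : ∀ p0, 0 < p0 → ∀ s ∈ posOrth m ∩ A, haarProfit φ d h p0 s = 0) :
    h =ᵐ[mulHaarPi m] 0 :=
  (piqInj_iff (one_pos.trans_le hr).ne').1 hφInj h hh fun p0 hp0 =>
    EqOn.of_subset_closure (h_zero p0 hp0) (hφ.continuousOn_haarProfit hr hd hh hp0)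
      continuousOn_const inter_subset_left (hA.open_subset_closure_inter (isOpen_posOrth m))

end NestedCost

theorem piqInj_nestedCost_general {k m : ℕ} {q : (Fin (k + 1) → ℝ) → ℝ}
    (hq : IsCostFun (k + 1) q) {φ : (Fin m → ℝ) → ℝ} (hφ : IsCostFun m φ) {r : ℝ≥0∞} (hr : 1 ≤ r)
    {c : Fin k → ℝ} (hc : ∀ i, 0 < c i) {d : Fin m → ℝ} (hd : ∀ j, 0 < d j)
    (hqInj : PiqInj (k + 1) r q (Fin.snoc c (∑ j, d j))) (hφInj : PiqInj m r φ d) :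
    IsCostFun (k + m) (nestedCost k m q φ) ∧
      PiqInj (k + m) r (nestedCost k m q φ) (Fin.append c d) := by
  refine ⟨isCostFun_nestedCost hq hφ, (piqInj_iff_of_measurePreserving (one_pos.trans_le hr).ne' _
    (measurePreserving_append_mulHaarPi k m)).2 fun g hg h_zero => ?_⟩
  obtain ⟨A, hA_countable, hA_dense⟩ := TopologicalSpace.exists_countable_dense (Fin m → ℝ)
  have h_avg : ∀ᵐ x ∂mulHaarPi k, ∀ s ∈ posOrth m ∩ A, ∀ᵐ t ∂mulHaar,
      radialAverage (scaledCost φ s) d g (x, t) = 0 :=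
    (ae_ball_iff (hA_countable.mono inter_subset_right)).2 fun s hs => Measure.ae_ae_of_ae_prod
      (radialAverage_ae_eq_zero hq hφ hr hc hd hqInj hg h_zero hs.1)
  refine ae_eq_zero_of_ae_section_eq_zero hg.1 ?_
  filter_upwards [h_avg, ae_memLp_section hg] with x hx_avg hx_mem
  refine eq_zero_of_haarProfit_eq_zero_on_dense hφ hr hd hφInj hx_mem hA_dense fun p0 hp0 s hs => ?_
  exact haarProfit_eq_zero_of_radialAverage hφ hr hd hs.1 hx_mem (hx_avg s hs) hp0

/-- Injectivity of the profit operator is preserved under composition of cost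
functions: if `Π_q` is injective on `L^r_{I-c'}(ℝ^{k+1}_+)` with `c' = (c, d₁+⋯+d_m)`
and `Π_φ` is injective on `L^r_{I-d}(ℝ^m_+)`, then `q̃(x,y) = q(x,φ(y))` satisfies the
cost-function conditions and `Π_{q̃}` is injective on `L^r_{I-c''}(ℝ^{k+m}_+)`,
`c'' = (c,d)`. -/
theorem piqInj_nestedCost
    (k m : ℕ) (hk : 1 ≤ k) (hm : 2 ≤ m)
    (q : (Fin (k + 1) → ℝ) → ℝ) (hq : IsCostFun (k + 1) q)
    (φ : (Fin m → ℝ) → ℝ) (hφ : IsCostFun m φ)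
    (r : ℝ≥0∞) (hr : r = 1 ∨ r = 2 ∨ r = ⊤)
    (c : Fin k → ℝ) (hc : ∀ i, 0 < c i)
    (d : Fin m → ℝ) (hd : ∀ j, 0 < d j)
    (hqInj : PiqInj (k + 1) r q (Fin.snoc c (∑ j, d j)))
    (hφInj : PiqInj m r φ d) :
    IsCostFun (k + m) (nestedCost k m q φ) ∧
      PiqInj (k + m) r (nestedCost k m q φ) (Fin.append c d) :=
  piqInj_nestedCost_general hq hφ (by rcases hr with rfl | rfl | rfl <;> simp) hc hd hqInj hφInj
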